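/- arXiv:math/0110298 — 2 statements merged into one kernel-verified Lean document; each statement's English description precedes it below -/
import Mathlib

section
/- Let Ω ⊆ ℂ be an open set, let γ : ℂ → ℝ be twice continuously differentiable on Ω with γ(z) > 0 for all z ∈ Ω, and let u : ℂ → ℝ be twice continuously differentiable on Ω and satisfy the conductivity equation ∂ₓ(γ ∂ₓu) + ∂_y(γ ∂_yu) = 0 on Ω. Define q = −γ^{−1/2}·∂(γ^{1/2}), v = γ^{1/2}·∂u and w = γ^{1/2}·∂̄u on Ω (so q, v, w : Ω → ℂ). Then on Ω one has ∂̄v = q·w and ∂w = conj(q)·v; that is, the column (v,w) solves the first-order system (D − Q)(v,w)ᵀ = 0 with D = diag(∂̄, ∂) and Q the off-diagonal matrix with entries q and conj(q). -/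
open MeasureTheory Complex

/-- Wirtinger derivative `∂f = (∂ₓf − i∂_yf)/2` of `f : ℂ → ℂ`. -/
noncomputable def wD (f : ℂ → ℂ) (z : ℂ) : ℂ :=
  (fderiv ℝ f z 1 - Complex.I * fderiv ℝ f z Complex.I) / 2

/-- Wirtinger derivative `∂̄f = (∂ₓf + i∂_yf)/2` of `f : ℂ → ℂ`. -/
noncomputable def wDbar (f : ℂ → ℂ) (z : ℂ) : ℂ :=
  (fderiv ℝ f z 1 + Complex.I * fderiv ℝ f z Complex.I) / 2

/-!
With `s = γ^{1/2}`, the conductivity equation reads `∂̄(s²)·∂u + ∂(s²)·∂̄u + 2s²·∂̄∂u = 0`. Dividing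
by `2s` gives `∂̄s·∂u + s·∂̄∂u = -∂s·∂̄u`, whose left side is `∂̄(s·∂u)` by the product rule.
Since `∂∂̄u = ∂̄∂u`, the same equation also reads `∂(s·∂̄u) = -∂̄s·∂u`, and `∂̄s = conj (∂s)`
because `s` is real.
-/

open scoped Topology

theorem fderiv_clm_apply_const {𝕜 E F G : Type*} [NontriviallyNormedField 𝕜]
    [NormedAddCommGroup E] [NormedSpace 𝕜 E] [NormedAddCommGroup F] [NormedSpace 𝕜 F]
    [NormedAddCommGroup G] [NormedSpace 𝕜 G] {c : E → F →L[𝕜] G} {x : E}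
    (hc : DifferentiableAt 𝕜 c x) (a : F) (b : E) :
    fderiv 𝕜 (fun y => c y a) x b = fderiv 𝕜 c x b a := by
  simp [fderiv_clm_apply hc (differentiableAt_const a)]

section RealValued

variable {E : Type*} [NormedAddCommGroup E] [NormedSpace ℝ E] {f : E → ℝ} {x : E}

theorem differentiableAt_ofReal_comp_iff :
    DifferentiableAt ℝ (fun y => (f y : ℂ)) x ↔ DifferentiableAt ℝ f x :=
  ⟨fun hf => reCLM.differentiableAt.comp x hf, fun hf => ofRealCLM.differentiableAt.comp x hf⟩

theorem fderiv_ofReal_comp_apply (f : E → ℝ) (x a : E) :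
    fderiv ℝ (fun y => (f y : ℂ)) x a = (fderiv ℝ f x a : ℂ) := by
  by_cases hf : DifferentiableAt ℝ f x
  · exact DFunLike.congr_fun (ofRealCLM.hasFDerivAt.comp x hf.hasFDerivAt).fderiv a
  · rw [fderiv_zero_of_not_differentiableAt hf,
      fderiv_zero_of_not_differentiableAt (mt differentiableAt_ofReal_comp_iff.1 hf)]
    simp only [zero_apply, ofReal_zero]

end RealValued

section Wirtinger

variable {f g : ℂ → ℂ} {z : ℂ}

theorem wD_congr (h : f =ᶠ[𝓝 z] g) : wD f z = wD g z := by
  simp only [wD, h.fderiv_eq]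

theorem wDbar_congr (h : f =ᶠ[𝓝 z] g) : wDbar f z = wDbar g z := by
  simp only [wDbar, h.fderiv_eq]

theorem wD_mul (hf : DifferentiableAt ℝ f z) (hg : DifferentiableAt ℝ g z) :
    wD (fun ζ => f ζ * g ζ) z = wD f z * g z + f z * wD g z := by
  simp only [wD, fderiv_fun_mul hf hg, add_apply, smul_apply, smul_eq_mul]
  ring

theorem wDbar_mul (hf : DifferentiableAt ℝ f z) (hg : DifferentiableAt ℝ g z) :
    wDbar (fun ζ => f ζ * g ζ) z = wDbar f z * g z + f z * wDbar g z := by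
  simp only [wDbar, fderiv_fun_mul hf hg, add_apply, smul_apply, smul_eq_mul]
  ring

theorem wDbar_conj (f : ℂ → ℂ) (z : ℂ) :
    wDbar (fun ζ => starRingEnd ℂ (f ζ)) z = starRingEnd ℂ (wD f z) := by
  have hconj (a : ℂ) :
      fderiv ℝ (fun ζ => starRingEnd ℂ (f ζ)) z a = starRingEnd ℂ (fderiv ℝ f z a) :=
    DFunLike.congr_fun conjCLE.comp_fderiv a
  simp only [wD, wDbar, hconj, map_div₀, map_sub, map_mul, conj_I, map_ofNat]
  ring

theorem wDbar_ofReal_comp (f : ℂ → ℝ) (z : ℂ) :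
    wDbar (fun ζ => (f ζ : ℂ)) z = starRingEnd ℂ (wD (fun ζ => (f ζ : ℂ)) z) := by
  simpa only [conj_ofReal] using wDbar_conj (fun ζ => (f ζ : ℂ)) z

theorem differentiableAt_wD (hf : DifferentiableAt ℝ (fderiv ℝ f) z) :
    DifferentiableAt ℝ (wD f) z := by
  unfold wD
  fun_prop

theorem differentiableAt_wDbar (hf : DifferentiableAt ℝ (fderiv ℝ f) z) :
    DifferentiableAt ℝ (wDbar f) z := by
  unfold wDbar
  fun_prop

theorem fderiv_wD_apply (hf : DifferentiableAt ℝ (fderiv ℝ f) z) (b : ℂ) :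
    fderiv ℝ (wD f) z b =
      (fderiv ℝ (fderiv ℝ f) z b 1 - I * fderiv ℝ (fderiv ℝ f) z b I) / 2 := by
  have hpartial (a : ℂ) : DifferentiableAt ℝ (fun ζ => fderiv ℝ f ζ a) z := by fun_prop
  unfold wD
  simp only [div_eq_mul_inv]
  rw [fderiv_mul_const (by fun_prop), fderiv_fun_sub (hpartial 1) ((hpartial I).const_mul I),
    fderiv_const_mul (hpartial I)]
  simp only [sub_apply, smul_apply, smul_eq_mul, fderiv_clm_apply_const hf]
  ring

theorem fderiv_wDbar_apply (hf : DifferentiableAt ℝ (fderiv ℝ f) z) (b : ℂ) :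
    fderiv ℝ (wDbar f) z b =
      (fderiv ℝ (fderiv ℝ f) z b 1 + I * fderiv ℝ (fderiv ℝ f) z b I) / 2 := by
  have hpartial (a : ℂ) : DifferentiableAt ℝ (fun ζ => fderiv ℝ f ζ a) z := by fun_prop
  unfold wDbar
  simp only [div_eq_mul_inv]
  rw [fderiv_mul_const (by fun_prop), fderiv_fun_add (hpartial 1) ((hpartial I).const_mul I),
    fderiv_const_mul (hpartial I)]
  simp only [add_apply, smul_apply, smul_eq_mul, fderiv_clm_apply_const hf]
  ring

theorem wDbar_wD (hf : DifferentiableAt ℝ (fderiv ℝ f) z) (hsymm : IsSymmSndFDerivAt ℝ f z) :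
    wDbar (wD f) z = (fderiv ℝ (fderiv ℝ f) z 1 1 + fderiv ℝ (fderiv ℝ f) z I I) / 4 := by
  rw [wDbar, fderiv_wD_apply hf, fderiv_wD_apply hf, hsymm.eq 1 I]
  linear_combination (-fderiv ℝ (fderiv ℝ f) z I I / 4) * I_sq

theorem wD_wDbar_comm (hf : DifferentiableAt ℝ (fderiv ℝ f) z) (hsymm : IsSymmSndFDerivAt ℝ f z) :
    wD (wDbar f) z = wDbar (wD f) z := by
  rw [wDbar_wD hf hsymm, wD, fderiv_wDbar_apply hf, fderiv_wDbar_apply hf, hsymm.eq 1 I]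
  linear_combination (-fderiv ℝ (fderiv ℝ f) z I I / 4) * I_sq

end Wirtinger

section Conductivity

/-- The conductivity operator `∇·(g∇f) = ∂ₓ(g ∂ₓf) + ∂_y(g ∂_yf)` in the plane. The values lie in
an arbitrary real normed algebra, so that real and complex solutions are both covered. -/
noncomputable def conductivityOp {A : Type*} [NormedRing A] [NormedAlgebra ℝ A]
    (g f : ℂ → A) (z : ℂ) : A :=
  fderiv ℝ (fun ζ => g ζ * fderiv ℝ f ζ 1) z 1 + fderiv ℝ (fun ζ => g ζ * fderiv ℝ f ζ I) z I

theorem conductivityOp_congr_left {A : Type*} [NormedRing A] [NormedAlgebra ℝ A]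
    {g h f : ℂ → A} {z : ℂ} (hgh : g =ᶠ[𝓝 z] h) :
    conductivityOp g f z = conductivityOp h f z := by
  have hflux (a : ℂ) :
      (fun ζ => g ζ * fderiv ℝ f ζ a) =ᶠ[𝓝 z] fun ζ => h ζ * fderiv ℝ f ζ a :=
    hgh.mul .rfl
  simp only [conductivityOp, (hflux _).fderiv_eq]

theorem conductivityOp_ofReal_comp (g f : ℂ → ℝ) (z : ℂ) :
    conductivityOp (fun ζ => (g ζ : ℂ)) (fun ζ => (f ζ : ℂ)) z =
      ((conductivityOp g f z : ℝ) : ℂ) := by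
  simp only [conductivityOp, fderiv_ofReal_comp_apply, ← ofReal_mul, ofReal_add]

variable {g s f : ℂ → ℂ} {z : ℂ}

theorem conductivityOp_eq_wirtinger (hg : DifferentiableAt ℝ g z)
    (hf : DifferentiableAt ℝ (fderiv ℝ f) z) (hsymm : IsSymmSndFDerivAt ℝ f z) :
    conductivityOp g f z =
      2 * (wDbar g z * wD f z + wD g z * wDbar f z + 2 * g z * wDbar (wD f) z) := by
  have hflux (a : ℂ) : fderiv ℝ (fun ζ => g ζ * fderiv ℝ f ζ a) z a =
      g z * fderiv ℝ (fderiv ℝ f) z a a + fderiv ℝ g z a * fderiv ℝ f z a := by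
    rw [fderiv_fun_mul hg (hf.clm_apply (differentiableAt_const a))]
    simp only [add_apply, smul_apply, smul_eq_mul, fderiv_clm_apply_const hf]
    ring
  rw [conductivityOp, hflux, hflux, wDbar_wD hf hsymm, wD, wDbar, wD, wDbar]
  linear_combination (fderiv ℝ g z I * fderiv ℝ f z I) * I_sq

theorem wirtinger_conductivity_eq_zero (hs : DifferentiableAt ℝ s z) (hsz : s z ≠ 0)
    (hf : DifferentiableAt ℝ (fderiv ℝ f) z) (hsymm : IsSymmSndFDerivAt ℝ f z)
    (hcond : conductivityOp (fun ζ => s ζ * s ζ) f z = 0) :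
    wDbar s z * wD f z + wD s z * wDbar f z + s z * wDbar (wD f) z = 0 := by
  rw [conductivityOp_eq_wirtinger (hs.fun_mul hs) hf hsymm, wD_mul hs hs,
    wDbar_mul hs hs] at hcond
  apply mul_left_cancel₀ hsz
  linear_combination hcond / 4

theorem wDbar_mul_wD_of_conductivityOp_mul_self_eq_zero (hs : DifferentiableAt ℝ s z)
    (hsz : s z ≠ 0) (hf : DifferentiableAt ℝ (fderiv ℝ f) z)
    (hsymm : IsSymmSndFDerivAt ℝ f z) (hcond : conductivityOp (fun ζ => s ζ * s ζ) f z = 0) :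
    wDbar (fun ζ => s ζ * wD f ζ) z = -(wD s z * wDbar f z) := by
  rw [wDbar_mul hs (differentiableAt_wD hf)]
  linear_combination wirtinger_conductivity_eq_zero hs hsz hf hsymm hcond

theorem wD_mul_wDbar_of_conductivityOp_mul_self_eq_zero (hs : DifferentiableAt ℝ s z)
    (hsz : s z ≠ 0) (hf : DifferentiableAt ℝ (fderiv ℝ f) z)
    (hsymm : IsSymmSndFDerivAt ℝ f z) (hcond : conductivityOp (fun ζ => s ζ * s ζ) f z = 0) :
    wD (fun ζ => s ζ * wDbar f ζ) z = -(wDbar s z * wD f z) := by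
  rw [wD_mul hs (differentiableAt_wDbar hf), wD_wDbar_comm hf hsymm]
  linear_combination wirtinger_conductivity_eq_zero hs hsz hf hsymm hcond

end Conductivity

theorem reduction_to_first_order_system_general {Ω : Set ℂ} (hΩ : IsOpen Ω) {γ : ℂ → ℝ}
    {u : ℂ → ℂ} (hγ : DifferentiableOn ℝ γ Ω) (hγpos : ∀ z ∈ Ω, 0 < γ z)
    (hu : DifferentiableOn ℝ u Ω) (hu' : DifferentiableOn ℝ (fderiv ℝ u) Ω)
    (hcond : ∀ z ∈ Ω, conductivityOp (fun ζ => (γ ζ : ℂ)) u z = 0)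
    {q v w : ℂ → ℂ}
    (hq : ∀ z ∈ Ω, q z = -(√(γ z) : ℂ)⁻¹ * wD (fun ζ => (√(γ ζ) : ℂ)) z)
    (hv : ∀ z ∈ Ω, v z = (√(γ z) : ℂ) * wD u z)
    (hw : ∀ z ∈ Ω, w z = (√(γ z) : ℂ) * wDbar u z) :
    ∀ z ∈ Ω, wDbar v z = q z * w z ∧ wD w z = starRingEnd ℂ (q z) * v z := by
  intro z hz
  have hΩz : Ω ∈ 𝓝 z := hΩ.mem_nhds hz
  have hs : DifferentiableAt ℝ (fun ζ => (√(γ ζ) : ℂ)) z :=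
    differentiableAt_ofReal_comp_iff.2 ((hγ.differentiableAt hΩz).sqrt (hγpos z hz).ne')
  have hsz : (√(γ z) : ℂ) ≠ 0 := ofReal_ne_zero.2 (Real.sqrt_pos.2 (hγpos z hz)).ne'
  have hu'z : DifferentiableAt ℝ (fderiv ℝ u) z := hu'.differentiableAt hΩz
  have hsymm : IsSymmSndFDerivAt ℝ u z := second_derivative_symmetric_of_eventually
    ((hΩ.eventually_mem hz).mono fun ζ hζ => (hu.differentiableAt (hΩ.mem_nhds hζ)).hasFDerivAt)
    hu'z.hasFDerivAt
  have hγs : (fun ζ => (γ ζ : ℂ)) =ᶠ[𝓝 z] fun ζ => (√(γ ζ) : ℂ) * (√(γ ζ) : ℂ) := by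
    filter_upwards [hΩz] with ζ hζ
    rw [← ofReal_mul, Real.mul_self_sqrt (hγpos ζ hζ).le]
  have hconds := (conductivityOp_congr_left hγs).symm.trans (hcond z hz)
  constructor
  · rw [wDbar_congr (Filter.eventuallyEq_of_mem hΩz hv),
      wDbar_mul_wD_of_conductivityOp_mul_self_eq_zero hs hsz hu'z hsymm hconds, hq z hz, hw z hz]
    field_simp
  · rw [wD_congr (Filter.eventuallyEq_of_mem hΩz hw),
      wD_mul_wDbar_of_conductivityOp_mul_self_eq_zero hs hsz hu'z hsymm hconds, hq z hz, hv z hz,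
      wDbar_ofReal_comp, map_mul, map_neg, map_inv₀, conj_ofReal]
    field_simp

/-- If `u` solves the conductivity equation `∇·γ∇u = 0` on `Ω`, then
`(v,w) = γ^{1/2}(∂u, ∂̄u)` solves the first order system `(D−Q)(v,w)ᵀ = 0`,
i.e. `∂̄v = q·w` and `∂w = conj(q)·v` with `q = −γ^{−1/2}∂(γ^{1/2})`. -/
theorem reduction_to_first_order_system
    (Ω : Set ℂ) (hΩ : IsOpen Ω) (γ : ℂ → ℝ) (u : ℂ → ℝ)
    (hγ : ContDiffOn ℝ 2 γ Ω) (hγpos : ∀ z ∈ Ω, 0 < γ z)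
    (hu : ContDiffOn ℝ 2 u Ω)
    (hcond : ∀ z ∈ Ω,
      fderiv ℝ (fun ζ => γ ζ * fderiv ℝ u ζ 1) z 1
        + fderiv ℝ (fun ζ => γ ζ * fderiv ℝ u ζ Complex.I) z Complex.I = 0)
    (q v w : ℂ → ℂ)
    (hq : ∀ z ∈ Ω, q z
      = -((Real.sqrt (γ z) : ℂ))⁻¹ * wD (fun ζ => (Real.sqrt (γ ζ) : ℂ)) z)
    (hv : ∀ z ∈ Ω, v z = (Real.sqrt (γ z) : ℂ) * wD (fun ζ => (u ζ : ℂ)) z)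
    (hw : ∀ z ∈ Ω, w z = (Real.sqrt (γ z) : ℂ) * wDbar (fun ζ => (u ζ : ℂ)) z) :
    ∀ z ∈ Ω, wDbar v z = q z * w z ∧ wD w z = (starRingEnd ℂ) (q z) * v z := by
  have huℂ : ContDiffOn ℝ 2 (fun ζ => (u ζ : ℂ)) Ω := ofRealCLM.contDiff.comp_contDiffOn hu
  exact reduction_to_first_order_system_general hΩ (hγ.differentiableOn two_ne_zero) hγpos
    (huℂ.differentiableOn two_ne_zero)
    ((huℂ.fderiv_of_isOpen hΩ (m := 1) (by norm_num)).differentiableOn one_ne_zero)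
    (fun z hz => by rw [conductivityOp_ofReal_comp]; exact_mod_cast hcond z hz) hq hv hw
end

section
/- Fix z ∈ ℂ. Let S₁₂, S₂₁ : ℂ → ℂ satisfy the symmetry S₂₁(k) = conj(S₁₂(conj(k))) for all k. Let M₁₁, M₁₂ : ℂ → ℂ be functions of k such that the maps k ↦ M₁₁(k), k ↦ M₁₂(k) and k ↦ M₁₂(conj(k)), k ↦ M₁₁(conj(k)) are real-differentiable and satisfy, for all k ∈ ℂ, ∂̄_k M₁₁(k) = M₁₂(conj(k))·e(z,−k)·S₂₁(k) and ∂̄_k M₁₂(k) = M₁₁(conj(k))·e(z,conj(k))·S₁₂(k). Define m₊ : ℂ → ℂ by m₊(k) = M₁₁(k) + conj(M₁₂(conj(k))). Then m₊ is real-differentiable and satisfies the pseudoanalytic equation ∂̄_k m₊(k) = e(z,−k)·S₂₁(k)·conj(m₊(k)) for all k ∈ ℂ. -/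
open MeasureTheory Complex

/-- The unimodular factor `e(z,k) = exp(i(zk + conj(zk)))`. -/
noncomputable def eFun (z k : ℂ) : ℂ :=
  Complex.exp (Complex.I * (z * k + (starRingEnd ℂ) (z * k)))

/-!
The reflection `f ↦ conj (f (conj ·))` commutes with `∂̄`. Reflecting the equation for `M₁₂`
therefore gives one for `∂̄ (conj (M₁₂ (conj k)))` whose coefficient, by the hermitian symmetry and
`conj (e(z,k)) = e(z,-k)`, is `e(z,-k) S₂₁(k)`, the same as in the equation for `M₁₁`. The two
equations then add up to the claim.
-/

open scoped ComplexConjugate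

section Wirtinger

variable {f g : ℂ → ℂ} {k : ℂ}

theorem wDbar_add (hf : DifferentiableAt ℝ f k) (hg : DifferentiableAt ℝ g k) :
    wDbar (fun κ => f κ + g κ) k = wDbar f k + wDbar g k := by
  simp only [wDbar, fderiv_fun_add hf hg, add_apply]
  ring

theorem differentiableAt_conj_comp_conj (hf : DifferentiableAt ℝ f (conj k)) :
    DifferentiableAt ℝ (fun κ => conj (f (conj κ))) k :=
  conjCLE.differentiableAt.comp k (hf.comp k conjCLE.differentiableAt)

theorem fderiv_conj_comp_conj_apply (f : ℂ → ℂ) (k v : ℂ) :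
    fderiv ℝ (fun κ => conj (f (conj κ))) k v = conj (fderiv ℝ f (conj k) (conj v)) := by
  have h_outer := conjCLE.comp_fderiv (f := f ∘ conjCLE) (x := k)
  rw [conjCLE.comp_right_fderiv] at h_outer
  exact DFunLike.congr_fun h_outer v

theorem wDbar_conj_comp_conj (f : ℂ → ℂ) (k : ℂ) :
    wDbar (fun κ => conj (f (conj κ))) k = conj (wDbar f (conj k)) := by
  simp only [wDbar, fderiv_conj_comp_conj_apply, map_div₀, map_add, map_mul, map_one, conj_I,
    map_neg, map_ofNat, neg_mul, mul_neg]

theorem wDbar_add_conj_comp_conj_of_coupled {a : ℂ} (hf : DifferentiableAt ℝ f k)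
    (hg : DifferentiableAt ℝ g (conj k)) (hf_eq : wDbar f k = a * g (conj k))
    (hg_eq : wDbar g (conj k) = conj a * f k) :
    wDbar (fun κ => f κ + conj (g (conj κ))) k = a * conj (f k + conj (g (conj k))) :=
  calc
    wDbar (fun κ => f κ + conj (g (conj κ))) k = wDbar f k + conj (wDbar g (conj k)) := by
      rw [wDbar_add hf (differentiableAt_conj_comp_conj hg), wDbar_conj_comp_conj]
    _ = a * g (conj k) + a * conj (f k) := by rw [hf_eq, hg_eq, map_mul, conj_conj]
    _ = a * conj (f k + conj (g (conj k))) := by rw [map_add, conj_conj]; ring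

end Wirtinger

theorem conj_eFun (z k : ℂ) : conj (eFun z k) = eFun z (-k) := by
  rw [eFun, eFun, ← exp_conj]
  congr 1
  simp only [map_mul, map_add, map_neg, conj_I, conj_conj]
  ring

/-- For fixed `z`, the combination `m₊(k) = M₁₁(k) + conj(M₁₂(k̄))` satisfies the
pseudoanalytic equation `∂̄_k m₊(k) = e(z,−k)·S₂₁(k)·conj(m₊(k))`. -/
theorem pseudoanalytic_equation_for_m_plus
    (z : ℂ) (S12 S21 : ℂ → ℂ)
    (hsym : ∀ k : ℂ, S21 k = (starRingEnd ℂ) (S12 ((starRingEnd ℂ) k)))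
    (M11 M12 : ℂ → ℂ)
    (hd11 : Differentiable ℝ M11) (hd12 : Differentiable ℝ M12)
    (hd12c : Differentiable ℝ fun k => M12 ((starRingEnd ℂ) k))
    (hd11c : Differentiable ℝ fun k => M11 ((starRingEnd ℂ) k))
    (h11 : ∀ k : ℂ, wDbar M11 k = M12 ((starRingEnd ℂ) k) * eFun z (-k) * S21 k)
    (h12 : ∀ k : ℂ,
      wDbar M12 k = M11 ((starRingEnd ℂ) k) * eFun z ((starRingEnd ℂ) k) * S12 k) :
    Differentiable ℝ (fun k => M11 k + (starRingEnd ℂ) (M12 ((starRingEnd ℂ) k))) ∧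
    ∀ k : ℂ,
      wDbar (fun κ => M11 κ + (starRingEnd ℂ) (M12 ((starRingEnd ℂ) κ))) k
        = eFun z (-k) * S21 k *
          (starRingEnd ℂ) (M11 k + (starRingEnd ℂ) (M12 ((starRingEnd ℂ) k))) := by
  refine ⟨fun k => (hd11 k).add (differentiableAt_conj_comp_conj (hd12 _)), fun k => ?_⟩
  have h_conj_coeff : conj (eFun z (-k) * S21 k) = eFun z k * S12 (conj k) := by
    rw [map_mul, conj_eFun, neg_neg, hsym, conj_conj]
  refine wDbar_add_conj_comp_conj_of_coupled (hd11 k) (hd12 _) ?_ ?_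
  · rw [h11]
    ring
  · rw [h12, h_conj_coeff, conj_conj]
    ring
end
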